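/- arXiv:2211.09417 — 5 statements merged into one kernel-verified Lean document; each statement's English description precedes it below -/
import Mathlib

section
/- Let C be a central word. Then there exist palindromes U and V such that 0·C·1 = U·V and 1·C·0 = V·U; in particular, the words 0·C·1 and 1·C·0 are conjugates. -/
/-- The lower Christoffel word `w_{a,b}`: the binary word of length `a+b` whose
`k`-th letter (1-based) is `⌊kb/(a+b)⌋ - ⌊(k-1)b/(a+b)⌋` (with `false = 0`, `true = 1`). -/
def lowerChristoffel (a b : ℕ) : List Bool :=
  (List.range (a + b)).map fun i => decide ((i + 1) * b / (a + b) ≠ i * b / (a + b))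

/-- The upper Christoffel word `W_{a,b}`: the binary word of length `a+b` whose
`k`-th letter is `⌈kb/(a+b)⌉ - ⌈(k-1)b/(a+b)⌉`. -/
def upperChristoffel (a b : ℕ) : List Bool :=
  (List.range (a + b)).map fun i =>
    decide (((i + 1) * b + (a + b) - 1) / (a + b) ≠ (i * b + (a + b) - 1) / (a + b))

/-- `p` is a period of `w`: `p` is positive and `w_i = w_{i+p}` for all valid indices. -/
def HasPeriod (w : List Bool) (p : ℕ) : Prop :=
  0 < p ∧ ∀ i, i + p < w.length → w.getD i false = w.getD (i + p) false

/-- A central word: a binary word with two coprime periods `p`, `q` and length `p + q - 2`. -/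
def IsCentral (w : List Bool) : Prop :=
  ∃ p q : ℕ, Nat.Coprime p q ∧ HasPeriod w p ∧ HasPeriod w q ∧ w.length + 2 = p + q

/-- A binary word is balanced if any two factors of the same length have numbers of `1`s
differing by at most `1`. -/
def BalancedWord (w : List Bool) : Prop :=
  ∀ u v : List Bool, u <:+: w → v <:+: w → u.length = v.length →
    |(u.count true : ℤ) - (v.count true : ℤ)| ≤ 1

/-- `w^m`: the `m`-th power of the word `w`. -/
def wpow (w : List Bool) (m : ℕ) : List Bool := (List.replicate m w).flatten

/-- A word is primitive if it is not a proper power. -/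
def IsPrimitiveWord (w : List Bool) : Prop := ¬ ∃ (v : List Bool) (m : ℕ), 2 ≤ m ∧ w = wpow v m

/-- A Lyndon word: a nonempty primitive word lexicographically strictly smaller than all
of its proper nonempty suffixes (for the order `0 < 1`, i.e. `false < true`). -/
def IsLyndonWord (w : List Bool) : Prop :=
  w ≠ [] ∧ IsPrimitiveWord w ∧
    ∀ u v : List Bool, w = u ++ v → u ≠ [] → v ≠ [] → List.Lex (· < ·) w v

/-- `p` is the minimal period of `w`. -/
def IsMinPeriod (w : List Bool) (p : ℕ) : Prop :=
  HasPeriod w p ∧ ∀ q : ℕ, HasPeriod w q → p ≤ q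

/-- `u` is a factor of the infinite periodic word `w^ω`. -/
def IsOmegaFactor (u w : List Bool) : Prop := ∃ m : ℕ, u <:+: wpow w m

/-- A primitive Christoffel word: a lower or upper Christoffel word `w_{a,b}` with
`gcd(a,b) = 1`. -/
def IsPrimitiveChristoffel (c : List Bool) : Prop :=
  ∃ a b : ℕ, Nat.Coprime a b ∧ (c = lowerChristoffel a b ∨ c = upperChristoffel a b)

/-!
A word `w` with coprime periods `p` and `q` and length `p + q - 2` is a palindrome: if `p < q`,
deleting its first `p` letters leaves a central word with periods `p` and `q - p`, and a word of
period `p` inherits symmetry from this long suffix. Unless `p` or `q` is `1`, the prefix `P` of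
length `p - 2` and the suffix `Q` of length `q - 2` are palindromes as well, so
`w = P x y Q = Q y x P`. If `x = y`, the Fine–Wilf theorem forces `w` to be a power of a letter.
Otherwise `x` and `y` are the two letters of the alphabet, and
`x w y = (x Q x) (y P y)`, `y w x = (y P y) (x Q x)` or the same with the roles exchanged.
-/

section

variable {α : Type*} {w : List α} {a b c x y : α} {p q : ℕ}

section Period

open List

lemma hasPeriod_of_drop_prefix (h : w.drop p <+: w) : w.HasPeriod p := by
  rw [← prefix_append_right_inj (w.take p), take_append_drop] at h
  exact h

lemma eq_replicate_of_hasPeriod_one (hw : w.HasPeriod 1) (hc : c ∈ w) :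
    w = replicate w.length c := by
  have getElem?_eq_head : ∀ i < w.length, w[i]? = w[0]? := fun i hi ↦ by
    simpa only [Nat.mod_one] using hasPeriod_iff_forall_getElem?_mod.1 hw i hi
  obtain ⟨j, hj, rfl⟩ := getElem_of_mem hc
  refine eq_replicate_iff.2 ⟨rfl, fun d hd ↦ ?_⟩
  obtain ⟨i, hi, rfl⟩ := getElem_of_mem hd
  have := (getElem?_eq_head i hi).trans (getElem?_eq_head j hj).symm
  rwa [getElem?_eq_getElem hi, getElem?_eq_getElem hj, Option.some_inj] at this

lemma palindrome_drop_of_hasPeriod (hw : w.Palindrome) (hp : w.HasPeriod p) :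
    (w.drop p).Palindrome := by
  apply Palindrome.of_reverse_eq
  calc (w.drop p).reverse = w.reverse.take (w.length - p) := reverse_drop
    _ = w.take (w.drop p).length := by rw [hw.reverse_eq, length_drop]
    _ = w.drop p := (prefix_iff_eq_take.1 hp.drop_prefix).symm

-- The suffix `w.drop p` is also a prefix, so reversing it matches every letter of `w` with its
-- mirror image, except possibly the central letter.
lemma palindrome_of_palindrome_drop (hp : w.HasPeriod p) (hdrop : (w.drop p).Palindrome)
    (hlen : 2 * p ≤ w.length + 1) : w.Palindrome := by
  have mirror : ∀ i < w.length - p, w[i]? = w[w.length - 1 - i]? := fun i hi ↦ by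
    have hi' : i < (w.drop p).length := by rwa [length_drop]
    have hprefix : w[i]? = (w.drop p)[i]? := by
      rw [prefix_iff_eq_take.1 hp.drop_prefix, getElem?_take_of_lt hi']
    calc w[i]? = (w.drop p)[i]? := hprefix
      _ = (w.drop p).reverse[i]? := by rw [hdrop.reverse_eq]
      _ = w[p + ((w.drop p).length - 1 - i)]? := by rw [getElem?_reverse hi', getElem?_drop]
      _ = w[w.length - 1 - i]? := by rw [length_drop]; congr 1; omega
  refine Palindrome.of_reverse_eq (ext_getElem? fun i ↦ ?_)
  rcases le_or_gt w.length i with hi | hi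
  · simp [hi]
  rw [getElem?_reverse hi]
  rcases lt_trichotomy i (w.length - 1 - i) with h | h | h
  · exact (mirror i (by omega)).symm
  · rw [← h]
  · rw [mirror (w.length - 1 - i) (by omega)]
    congr 1
    omega

lemma exists_eq_drop_append_cons_cons_drop (hper : w.HasPeriod q) (hlen : w.length + 2 = p + q)
    (hp : 2 ≤ p) (hq : 2 ≤ q) : ∃ x y, w = w.drop q ++ x :: y :: w.drop p := by
  obtain ⟨v, hv⟩ := hper.drop_prefix
  have hdrop : (w.drop q).length + 2 = p := by rw [length_drop]; omega
  have hvlen : (w.drop q).length + v.length = w.length := by rw [← length_append, hv]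
  match v, hvlen with
  | x :: y :: t, _ =>
    have ht : w.drop p = t := by
      conv_lhs => rw [← hv, ← hdrop, drop_length_add_append]
      simp only [drop_succ_cons, drop_zero]
    exact ⟨x, y, by rw [ht, hv]⟩
  | [], hvlen | [_], hvlen =>
    simp only [length_nil, length_singleton] at hvlen
    omega

lemma hasPeriod_append_singleton_of_append_cons_cons_comm {P Q : List α}
    (hcomm : P ++ x :: x :: Q = Q ++ x :: x :: P) :
    (P ++ x :: x :: Q ++ [x]).HasPeriod (P.length + 2) := by
  apply hasPeriod_of_drop_prefix
  calc (P ++ x :: x :: Q ++ [x]).drop (P.length + 2) = Q ++ [x] := by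
        simp [drop_length_add_append]
    _ <+: P ++ x :: x :: Q ++ [x] := by simp [hcomm]

-- Appending one more `x` keeps the periods `|P| + 2` and `|Q| + 2` and makes the word just long
-- enough for the Fine–Wilf theorem.
lemma hasPeriod_one_of_append_cons_cons_comm {P Q : List α}
    (hcop : (P.length + 2).Coprime (Q.length + 2))
    (hcomm : P ++ x :: x :: Q = Q ++ x :: x :: P) : (P ++ x :: x :: Q).HasPeriod 1 := by
  have hP := hasPeriod_append_singleton_of_append_cons_cons_comm hcomm
  have hQ := hasPeriod_append_singleton_of_append_cons_cons_comm hcomm.symm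
  rw [← hcomm] at hQ
  have hone : (P ++ x :: x :: Q ++ [x]).HasPeriod 1 := by
    rw [← hcop.gcd_eq_one]
    refine hP.gcd hQ ?_
    simp only [hcop.gcd_eq_one, length_append, length_cons, length_nil]
    omega
  exact hone.infix (prefix_append _ _).isInfix

lemma palindrome_replicate (n : ℕ) (c : α) : (replicate n c).Palindrome :=
  .of_reverse_eq reverse_replicate

lemma exists_palindromes_of_hasPeriod_one (hw : w.HasPeriod 1) (hab : ∀ c ∈ w, c = a ∨ c = b) :
    ∃ U V : List α, U.Palindrome ∧ V.Palindrome ∧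
      a :: w ++ [b] = U ++ V ∧ b :: w ++ [a] = V ++ U := by
  have hw_cases : w = replicate w.length a ∨ w = replicate w.length b := by
    cases w with
    | nil => exact .inl rfl
    | cons c t =>
      have hc : c ∈ c :: t := mem_cons_self
      rcases hab c hc with rfl | rfl
      · exact .inl (eq_replicate_of_hasPeriod_one hw hc)
      · exact .inr (eq_replicate_of_hasPeriod_one hw hc)
  rcases hw_cases with h | h <;> rw [h]
  · exact ⟨replicate (w.length + 1) a, [b], palindrome_replicate _ _, .singleton b,
      by rw [replicate_succ], by rw [replicate_succ']; simp⟩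
  · exact ⟨[a], replicate (w.length + 1) b, .singleton a, palindrome_replicate _ _,
      by rw [replicate_succ']; simp, by rw [replicate_succ]⟩

end Period

/-- `CentralWord w p q` says that `w` is a central word with respect to the coprime periods `p`
and `q`. It extends `IsCentral` to words over an arbitrary alphabet and keeps the two periods as
parameters. -/
structure CentralWord (w : List α) (p q : ℕ) : Prop where
  coprime : p.Coprime q
  hasPeriod_left : w.HasPeriod p
  hasPeriod_right : w.HasPeriod q
  length_add_two : w.length + 2 = p + q

namespace CentralWord

lemma symm (h : CentralWord w p q) : CentralWord w q p :=
  ⟨h.coprime.symm, h.hasPeriod_right, h.hasPeriod_left, by rw [h.length_add_two, add_comm]⟩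

lemma left_pos (h : CentralWord w p q) : 0 < p := by
  rcases Nat.eq_zero_or_pos p with rfl | hp
  · have hq : q = 1 := (Nat.coprime_zero_left q).1 h.coprime
    have := h.length_add_two
    omega
  · exact hp

lemma drop (h : CentralWord w p q) (hpq : p < q) : CentralWord (w.drop p) p (q - p) where
  coprime := (Nat.coprime_sub_self_right hpq.le).2 h.coprime
  hasPeriod_left := h.hasPeriod_left.infix (List.drop_suffix p w).isInfix
  hasPeriod_right := h.hasPeriod_left.drop_of_hasPeriod_add <| by
    rw [Nat.sub_add_cancel hpq.le]
    exact h.hasPeriod_right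
  length_add_two := by
    have := h.length_add_two
    have := h.symm.left_pos
    rw [List.length_drop]
    omega

theorem palindrome {w : List α} {p q : ℕ} (h : CentralWord w p q) : w.Palindrome := by
  have hlen := h.length_add_two
  have hpos : 0 < p ∧ 0 < q := ⟨h.left_pos, h.symm.left_pos⟩
  rcases lt_trichotomy p q with hpq | rfl | hqp
  · exact palindrome_of_palindrome_drop h.hasPeriod_left (h.drop hpq).palindrome (by omega)
  · have hp1 : p = 1 := (Nat.coprime_self p).1 h.coprime
    have hw : w = [] := List.length_eq_zero_iff.1 (by omega)
    exact hw ▸ .nil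
  · exact palindrome_of_palindrome_drop h.hasPeriod_right (h.symm.drop hqp).palindrome (by omega)
termination_by p + q
decreasing_by all_goals omega

theorem hasPeriod_one_or_exists_palindromes (h : CentralWord w p q) :
    w.HasPeriod 1 ∨ ∃ P Q x y, P.Palindrome ∧ Q.Palindrome ∧ x ≠ y ∧
      w = P ++ x :: y :: Q ∧ w = Q ++ y :: x :: P := by
  rcases Nat.eq_or_lt_of_le h.left_pos with rfl | hp
  · exact .inl h.hasPeriod_left
  rcases Nat.eq_or_lt_of_le h.symm.left_pos with rfl | hq
  · exact .inl h.hasPeriod_right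
  have hP := palindrome_drop_of_hasPeriod h.palindrome h.hasPeriod_right
  have hQ := palindrome_drop_of_hasPeriod h.palindrome h.hasPeriod_left
  obtain ⟨x, y, hw⟩ := exists_eq_drop_append_cons_cons_drop h.hasPeriod_right
    h.length_add_two hp hq
  have hw' : w = w.drop p ++ y :: x :: w.drop q := by
    conv_lhs => rw [← h.palindrome.reverse_eq, hw]
    simp [hP.reverse_eq, hQ.reverse_eq]
  rcases eq_or_ne x y with rfl | hxy
  · left
    have hlen := h.length_add_two
    rw [hw]
    refine hasPeriod_one_of_append_cons_cons_comm ?_ (hw.symm.trans hw')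
    convert h.coprime using 1 <;> rw [List.length_drop] <;> omega
  · exact .inr ⟨_, _, x, y, hP, hQ, hxy, hw, hw'⟩

end CentralWord

lemma HasPeriod.list_hasPeriod {w : List Bool} (h : HasPeriod w p) : w.HasPeriod p := by
  refine List.hasPeriod_iff_getElem?.2 fun i hi ↦ ?_
  have hip : i + p < w.length := by omega
  have := h.2 i hip
  rw [List.getD_eq_getElem _ _ (by omega), List.getD_eq_getElem _ _ hip] at this
  rw [List.getElem?_eq_getElem (by omega), List.getElem?_eq_getElem hip, this]

theorem stmt0_general (h : CentralWord w p q) (hab : ∀ c ∈ w, c = a ∨ c = b) :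
    ∃ U V : List α, U.Palindrome ∧ V.Palindrome ∧
      a :: w ++ [b] = U ++ V ∧ b :: w ++ [a] = V ++ U := by
  rcases h.hasPeriod_one_or_exists_palindromes with hone | ⟨P, Q, x, y, hP, hQ, hxy, hPQ, hQP⟩
  · exact exists_palindromes_of_hasPeriod_one hone hab
  have hx : x = a ∨ x = b := hab x (by simp [hPQ])
  have hy : y = a ∨ y = b := hab y (by simp [hPQ])
  rcases hx with rfl | rfl <;> rcases hy with rfl | rfl
  · exact absurd rfl hxy
  · exact ⟨x :: (P ++ [x]), y :: (Q ++ [y]), hP.cons_concat x, hQ.cons_concat y,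
      by simp [hPQ], by simp [hQP]⟩
  · exact ⟨y :: (Q ++ [y]), x :: (P ++ [x]), hQ.cons_concat y, hP.cons_concat x,
      by simp [hQP], by simp [hPQ]⟩
  · exact absurd rfl hxy

end

/-- If `C` is a central word, then there exist palindromes `U`, `V` with
`0·C·1 = U·V` and `1·C·0 = V·U`; in particular `0·C·1` and `1·C·0` are conjugates. -/
theorem stmt0 (C : List Bool) (hC : IsCentral C) :
    ∃ U V : List Bool, U.Palindrome ∧ V.Palindrome ∧
      false :: C ++ [true] = U ++ V ∧ true :: C ++ [false] = V ++ U := by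
  obtain ⟨p, q, hpq, hp, hq, hlen⟩ := hC
  exact stmt0_general ⟨hpq, hp.list_hasPeriod, hq.list_hasPeriod, hlen⟩
    fun c _ ↦ c.eq_false_or_eq_true.symm
end

section
/- A binary word w is a central word if and only if w is a power of a single letter (possibly the empty word) or there exist palindromes P and Q such that w = P·01·Q = Q·10·P. Moreover, in the latter case, P and Q are central words, the integers |P|+2 and |Q|+2 are coprime, and both |P|+2 and |Q|+2 are periods of w. -/
/-!
Everything rests on the Fine–Wilf theorem. Write `p = |P| + 2` and `q = |Q| + 2`. An equation
`w = P·ab·Q = Q·cd·P` amounts to `w` having length `p + q - 2` and periods `p` and `q`.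
If `a ≠ c`, then `p` and `q` are coprime: otherwise `gcd p q > 1` would be a period of `w`, forcing
`a = c`. If `p` and `q` are coprime and `a = c`, then appending `a` to `w` gives a word of length
`p + q - 1` with the same periods, which is constant. Since `ab` and `cd` consist of the same
letters, either `w` is constant or `c = b ≠ a = d`. With `r = q % p`, the word `P` has the coprime
periods `r` and `p - r`, hence is again central, and likewise `Q`; by induction on the length all
three words are palindromes.
-/

section Periods

variable {α : Type*} {u v w P Q : List α} {a b c d : α} {p q r i j m n : ℕ}

theorem hasPeriod_append_of_prefix (h : v <+: u ++ v) : (u ++ v).HasPeriod u.length := by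
  simpa [List.HasPeriod, List.prefix_append_right_inj] using h

theorem hasPeriod_replicate : (List.replicate n a).HasPeriod p := by
  rw [List.hasPeriod_iff_getElem?]
  intro i hi
  rw [List.length_replicate] at hi
  rw [List.getElem?_replicate_of_lt (by lia), List.getElem?_replicate_of_lt (by lia)]

theorem getElem?_eq_of_hasPeriod_of_modEq (hw : w.HasPeriod p) (hi : i < w.length)
    (hj : j < w.length) (hij : i ≡ j [MOD p]) : w[i]? = w[j]? := by
  rw [← hw.getElem?_mod p i w hi, hij, hw.getElem?_mod p j w hj]

theorem hasPeriod_left_of_modEq (hp : (u ++ v).HasPeriod p) (hq : (u ++ v).HasPeriod q)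
    (hv : q ≤ v.length) (hr : r ≡ q [MOD p]) : u.HasPeriod r := by
  rw [List.hasPeriod_iff_getElem?] at hq ⊢
  intro i hi
  have hlen : (u ++ v).length = u.length + v.length := List.length_append
  calc u[i]? = (u ++ v)[i]? := (List.getElem?_append_left (by lia)).symm
    _ = (u ++ v)[i + q]? := hq i (by lia)
    _ = (u ++ v)[i + r]? :=
      getElem?_eq_of_hasPeriod_of_modEq hp (by lia) (by lia) (hr.symm.add_left i)
    _ = u[i + r]? := List.getElem?_append_left (by lia)

theorem hasPeriod_left_of_dvd_add (hp : (u ++ v).HasPeriod p) (hq : (u ++ v).HasPeriod q)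
    (hv : q ≤ v.length) (hr : p ∣ r + q) : u.HasPeriod r := by
  rw [List.hasPeriod_iff_getElem?] at hq ⊢
  intro i hi
  have hlen : (u ++ v).length = u.length + v.length := List.length_append
  have hmod : i ≡ i + r + q [MOD p] := by
    simpa [add_assoc] using (Nat.modEq_zero_iff_dvd.2 hr).symm.add_left i
  calc u[i]? = (u ++ v)[i]? := (List.getElem?_append_left (by lia)).symm
    _ = (u ++ v)[i + r + q]? := getElem?_eq_of_hasPeriod_of_modEq hp (by lia) (by lia) hmod
    _ = (u ++ v)[i + r]? := (hq (i + r) (by lia)).symm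
    _ = u[i + r]? := List.getElem?_append_left (by lia)

theorem eq_of_mem_of_hasPeriod_one (hw : w.HasPeriod 1) (ha : a ∈ w) (hb : b ∈ w) : a = b := by
  obtain ⟨i, hi, rfl⟩ := List.getElem_of_mem ha
  obtain ⟨j, hj, rfl⟩ := List.getElem_of_mem hb
  simpa [hi, hj] using getElem?_eq_of_hasPeriod_of_modEq hw hi hj Nat.modEq_one

theorem exists_eq_replicate_of_hasPeriod_one [Nonempty α] (hw : w.HasPeriod 1) :
    ∃ x n, w = List.replicate n x := by
  cases w with
  | nil => exact ⟨Classical.arbitrary α, 0, rfl⟩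
  | cons x t =>
    exact ⟨x, _, List.eq_replicate_of_mem fun y hy =>
      eq_of_mem_of_hasPeriod_one hw hy List.mem_cons_self⟩

theorem eq_of_mem_of_hasPeriod_of_coprime (hp : w.HasPeriod p) (hq : w.HasPeriod q)
    (hpq : p.Coprime q) (hlen : p + q ≤ w.length + 1) (ha : a ∈ w) (hb : b ∈ w) : a = b := by
  have hone : w.HasPeriod (p.gcd q) := hp.gcd hq (by rw [hpq.gcd_eq_one]; lia)
  rw [hpq.gcd_eq_one] at hone
  exact eq_of_mem_of_hasPeriod_one hone ha hb

theorem exists_eq_take_append_pair_append_take (hw : w.HasPeriod (m + 2))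
    (hlen : w.length = m + 2 + n) : ∃ a b, w = w.take m ++ [a, b] ++ w.take n := by
  obtain ⟨a, b, hab⟩ : ∃ a b, (w.drop m).take 2 = [a, b] :=
    List.length_eq_two.1 (by simp; lia)
  have hdrop : w.drop (m + 2) = w.take n := by
    rw [List.prefix_iff_eq_take.1 (hw.drop_prefix (m + 2)), List.length_drop, hlen,
      Nat.add_sub_cancel_left]
  refine ⟨a, b, ?_⟩
  rw [← hab, ← List.take_add, ← hdrop, List.take_append_drop]

theorem hasPeriod_of_append_pair_append_eq (h : P ++ [a, b] ++ Q = Q ++ [c, d] ++ P) :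
    (P ++ [a, b] ++ Q).HasPeriod (P.length + 2) := by
  have hQ : Q <+: P ++ [a, b] ++ Q := ⟨[c, d] ++ P, by rw [h, List.append_assoc]⟩
  simpa using hasPeriod_append_of_prefix hQ

theorem coprime_of_append_pair_append_eq (hac : a ≠ c)
    (h : P ++ [a, b] ++ Q = Q ++ [c, d] ++ P) : (P.length + 2).Coprime (Q.length + 2) := by
  by_contra hcop
  set g := (P.length + 2).gcd (Q.length + 2)
  have hg2 : 2 ≤ g := by
    have : 0 < g := Nat.gcd_pos_of_pos_left _ (by lia)
    have : g ≠ 1 := hcop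
    lia
  have hgper : (P ++ [a, b] ++ Q).HasPeriod g :=
    (hasPeriod_of_append_pair_append_eq h).gcd (h ▸ hasPeriod_of_append_pair_append_eq h.symm)
      (by simp; lia)
  have hmod : P.length ≡ Q.length [MOD g] := Nat.ModEq.add_right_cancel' 2 <|
    (Nat.modEq_zero_iff_dvd.2 (Nat.gcd_dvd_left _ _)).trans
      (Nat.modEq_zero_iff_dvd.2 (Nat.gcd_dvd_right _ _)).symm
  have ha : (P ++ [a, b] ++ Q)[P.length]? = some a := by simp
  have hc : (P ++ [a, b] ++ Q)[Q.length]? = some c := by rw [h]; simp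
  rw [getElem?_eq_of_hasPeriod_of_modEq hgper (by simp) (by simp; lia) hmod, hc] at ha
  exact hac (Option.some.inj ha).symm

theorem eq_of_mem_append_pair_append_of_coprime (hpq : (P.length + 2).Coprime (Q.length + 2))
    (h : P ++ [a, b] ++ Q = Q ++ [a, d] ++ P) : ∀ x ∈ P ++ [a, b] ++ Q, x = a := by
  have hext : P ++ [a, b] ++ (Q ++ [a]) = Q ++ [a, d] ++ (P ++ [a]) := by
    rw [← List.append_assoc, h, List.append_assoc]
  have hp : (P ++ [a, b] ++ (Q ++ [a])).HasPeriod (P.length + 2) := by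
    have hpre : Q ++ [a] <+: P ++ [a, b] ++ (Q ++ [a]) := ⟨[d] ++ P ++ [a], by simp [hext]⟩
    simpa using hasPeriod_append_of_prefix hpre
  have hq : (P ++ [a, b] ++ (Q ++ [a])).HasPeriod (Q.length + 2) := by
    have hpre : P ++ [a] <+: Q ++ [a, d] ++ (P ++ [a]) := ⟨[b] ++ Q ++ [a], by simp [← hext]⟩
    simpa [hext] using hasPeriod_append_of_prefix hpre
  intro x hx
  refine eq_of_mem_of_hasPeriod_of_coprime hp hq hpq (by simp; lia) ?_ (by simp)
  rw [← List.append_assoc]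
  exact List.mem_append_left _ hx

theorem perm_of_append_append_eq {s t : List α} (h : P ++ s ++ Q = Q ++ t ++ P) : s.Perm t := by
  have hcoe : (P + s + Q : Multiset α) = Q + t + P := by
    simpa only [Multiset.coe_add] using congrArg Multiset.ofList h
  rw [← Multiset.coe_eq_coe]
  refine add_left_cancel (a := (P + Q : Multiset α)) ?_
  rw [add_right_comm, hcoe]
  abel

theorem eq_replicate_or_swap_of_append_pair_append_eq
    (hpq : (P.length + 2).Coprime (Q.length + 2)) (h : P ++ [a, b] ++ Q = Q ++ [c, d] ++ P) :
    (∃ n, P ++ [a, b] ++ Q = List.replicate n a) ∨ a ≠ b ∧ c = b ∧ d = a := by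
  by_cases hac : a = c
  · subst hac
    exact .inl ⟨_, List.eq_replicate_of_mem (eq_of_mem_append_pair_append_of_coprime hpq h)⟩
  · have hperm : [a, b].Perm [c, d] := perm_of_append_append_eq h
    rcases List.pair_perm.1 hperm with heq | heq
    · exact absurd (List.cons.inj heq).1.symm hac
    · obtain ⟨rfl, rfl⟩ : c = b ∧ d = a := by simpa using heq
      exact .inr ⟨hac, rfl, rfl⟩

end Periods

theorem hasPeriod_iff {w : List Bool} {p : ℕ} : HasPeriod w p ↔ 0 < p ∧ w.HasPeriod p := by
  rw [HasPeriod, List.hasPeriod_iff_getElem?]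
  refine and_congr_right fun _ => forall_congr' fun i => ?_
  rw [Nat.lt_sub_iff_add_lt]
  refine forall_congr' fun hi => ?_
  rw [List.getD_eq_getElem _ _ hi, List.getD_eq_getElem _ _ (by lia),
    List.getElem?_eq_getElem hi, List.getElem?_eq_getElem (by lia), Option.some_inj]

theorem isCentral_replicate (n : ℕ) (x : Bool) : IsCentral (List.replicate n x) :=
  ⟨1, n + 1, Nat.coprime_one_left _, hasPeriod_iff.2 ⟨one_pos, hasPeriod_replicate⟩,
    hasPeriod_iff.2 ⟨n.succ_pos, hasPeriod_replicate⟩, by simp; lia⟩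

section Central

variable {w P Q : List Bool} {a b c d : Bool}

theorem isCentral_left_of_append_pair_append_eq (hpq : (P.length + 2).Coprime (Q.length + 2))
    (h : P ++ [a, b] ++ Q = Q ++ [c, d] ++ P) : IsCentral P := by
  have hp : (P ++ ([a, b] ++ Q)).HasPeriod (P.length + 2) := by
    simpa using hasPeriod_of_append_pair_append_eq h
  have hq : (P ++ ([a, b] ++ Q)).HasPeriod (Q.length + 2) := by
    rw [← List.append_assoc, h]
    exact hasPeriod_of_append_pair_append_eq h.symm
  have hlen : Q.length + 2 ≤ ([a, b] ++ Q).length := by simp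
  set p := P.length + 2
  set q := Q.length + 2
  have hr_lt : q % p < p := Nat.mod_lt q (by lia)
  have hcop : (q % p).Coprime p := (Nat.gcd_rec p q).symm.trans hpq
  have hr_pos : 0 < q % p := Nat.pos_of_ne_zero fun h0 => by
    rw [h0, Nat.coprime_zero_left] at hcop
    lia
  have hdvd : p ∣ p - q % p + q :=
    ⟨q / p + 1, by rw [mul_add, mul_one]; have := Nat.mod_add_div q p; lia⟩
  exact ⟨q % p, p - q % p, (Nat.coprime_sub_self_right hr_lt.le).2 hcop,
    hasPeriod_iff.2 ⟨hr_pos, hasPeriod_left_of_modEq hp hq hlen (Nat.mod_modEq q p)⟩,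
    hasPeriod_iff.2 ⟨by lia, hasPeriod_left_of_dvd_add hp hq hlen hdvd⟩, by lia⟩

theorem isCentral_append_pair_append (hpq : (P.length + 2).Coprime (Q.length + 2))
    (h : P ++ [a, b] ++ Q = Q ++ [c, d] ++ P) : IsCentral (P ++ [a, b] ++ Q) :=
  ⟨_, _, hpq, hasPeriod_iff.2 ⟨by lia, hasPeriod_of_append_pair_append_eq h⟩,
    hasPeriod_iff.2 ⟨by lia, h ▸ hasPeriod_of_append_pair_append_eq h.symm⟩, by simp; lia⟩

theorem IsCentral.exists_eq_replicate_or_exists_eq_append (hw : IsCentral w) :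
    (∃ x n, w = List.replicate n x) ∨
      ∃ P Q, w = P ++ [false, true] ++ Q ∧ w = Q ++ [true, false] ++ P := by
  obtain ⟨p, q, hpq, hp, hq, hlen⟩ := hw
  obtain ⟨hp0, hp⟩ := hasPeriod_iff.1 hp
  obtain ⟨hq0, hq⟩ := hasPeriod_iff.1 hq
  rcases eq_or_ne p 1 with rfl | hp1
  · exact .inl (exists_eq_replicate_of_hasPeriod_one hp)
  rcases eq_or_ne q 1 with rfl | hq1
  · exact .inl (exists_eq_replicate_of_hasPeriod_one hq)
  obtain ⟨m, rfl⟩ : ∃ m, p = m + 2 := ⟨p - 2, by lia⟩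
  obtain ⟨n, rfl⟩ : ∃ n, q = n + 2 := ⟨q - 2, by lia⟩
  obtain ⟨a, b, hPQ⟩ := exists_eq_take_append_pair_append_take (n := n) hp (by lia)
  obtain ⟨c, d, hQP⟩ := exists_eq_take_append_pair_append_take (n := m) hq (by lia)
  have hP : (w.take m).length = m := List.length_take_of_le (by lia)
  have hQ : (w.take n).length = n := List.length_take_of_le (by lia)
  rcases eq_replicate_or_swap_of_append_pair_append_eq (by rwa [hP, hQ]) (hPQ.symm.trans hQP) with
    ⟨k, hk⟩ | ⟨hab, rfl, rfl⟩
  · exact .inl ⟨_, k, hPQ.trans hk⟩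
  · cases c <;> cases d <;> try contradiction
    · exact .inr ⟨_, _, hQP, hPQ⟩
    · exact .inr ⟨_, _, hPQ, hQP⟩

theorem IsCentral.palindrome (hw : IsCentral w) : w.Palindrome := by
  induction hn : w.length using Nat.strong_induction_on generalizing w with
  | _ n ih =>
  subst hn
  rcases hw.exists_eq_replicate_or_exists_eq_append with ⟨x, n, rfl⟩ | ⟨P, Q, hPQ, hQP⟩
  · exact .of_reverse_eq List.reverse_replicate
  · have h := hPQ.symm.trans hQP
    have hpq := coprime_of_append_pair_append_eq Bool.false_ne_true h
    have hP : P.Palindrome :=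
      ih _ (by simp [hPQ]) (isCentral_left_of_append_pair_append_eq hpq h) rfl
    have hQ : Q.Palindrome :=
      ih _ (by simp [hQP]) (isCentral_left_of_append_pair_append_eq hpq.symm h.symm) rfl
    refine .of_reverse_eq ?_
    nth_rw 1 [hPQ]
    simp [hP.reverse_eq, hQ.reverse_eq, hQP]

end Central

theorem stmt1_general (w : List Bool) :
    (IsCentral w ↔
      ((∃ (x : Bool) (n : ℕ), w = List.replicate n x) ∨
        ∃ P Q : List Bool, w = P ++ [false, true] ++ Q ∧ w = Q ++ [true, false] ++ P)) ∧
    (∀ P Q : List Bool, w = P ++ [false, true] ++ Q → w = Q ++ [true, false] ++ P →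
      (P.Palindrome ∧ Q.Palindrome) ∧
      IsCentral P ∧ IsCentral Q ∧ Nat.Coprime (P.length + 2) (Q.length + 2) ∧
        HasPeriod w (P.length + 2) ∧ HasPeriod w (Q.length + 2)) := by
  refine ⟨⟨IsCentral.exists_eq_replicate_or_exists_eq_append, ?_⟩, ?_⟩
  · rintro (⟨x, n, rfl⟩ | ⟨P, Q, rfl, h⟩)
    · exact isCentral_replicate n x
    · exact isCentral_append_pair_append
        (coprime_of_append_pair_append_eq Bool.false_ne_true h) h
  · rintro P Q rfl h
    have hpq := coprime_of_append_pair_append_eq Bool.false_ne_true h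
    have hP : IsCentral P := isCentral_left_of_append_pair_append_eq hpq h
    have hQ : IsCentral Q := isCentral_left_of_append_pair_append_eq hpq.symm h.symm
    exact ⟨⟨hP.palindrome, hQ.palindrome⟩, hP, hQ, hpq,
      hasPeriod_iff.2 ⟨by lia, hasPeriod_of_append_pair_append_eq h⟩,
      hasPeriod_iff.2 ⟨by lia, h ▸ hasPeriod_of_append_pair_append_eq h.symm⟩⟩

/-- Structure theorem for central words. -/
theorem stmt1 (w : List Bool) :
    (IsCentral w ↔
      ((∃ (x : Bool) (n : ℕ), w = List.replicate n x) ∨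
        ∃ P Q : List Bool, P.Palindrome ∧ Q.Palindrome ∧
          w = P ++ [false, true] ++ Q ∧ w = Q ++ [true, false] ++ P)) ∧
    (∀ P Q : List Bool, P.Palindrome → Q.Palindrome →
      w = P ++ [false, true] ++ Q → w = Q ++ [true, false] ++ P →
      IsCentral P ∧ IsCentral Q ∧ Nat.Coprime (P.length + 2) (Q.length + 2) ∧
        HasPeriod w (P.length + 2) ∧ HasPeriod w (Q.length + 2)) := by
  obtain ⟨hiff, hparts⟩ := stmt1_general w
  refine ⟨hiff.trans (or_congr_right (exists₂_congr fun P Q => ?_)),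
    fun P Q _ _ hPQ hQP => (hparts P Q hPQ hQP).2⟩
  exact ⟨fun h => ⟨(hparts P Q h.1 h.2).1.1, (hparts P Q h.1 h.2).1.2, h⟩, fun h => h.2.2⟩
end

section
/- A binary word is a primitive lower Christoffel word (i.e., equals w_{a,b} for some coprime nonnegative integers a, b not both zero) if and only if it has length 1 or it is of the form 0·C·1 for a central word C. Similarly, a binary word is a primitive upper Christoffel word if and only if it has length 1 or it is of the form 1·C·0 for a central word C. -/
/-!
Label the position `k` of a word by `k * b mod n`, where `n = a + b`. The letters of the Christoffel
words of slope `(a, b)` compare these labels with `a`: away from the two ends, where the labels are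
`0` and `a`, the letter is `1` exactly when the label exceeds `a`. If `p` is the inverse of `b`
modulo `n` and `q = n - p`, then moving forward by `p` or backward by `q` increases the label by
one. Hence a word of length `n - 2` has periods `p` and `q` if and only if its letters are constant
along the labels below `a` and along the labels above `a`. The four ways of choosing these two
constants all give central words of some slope, possibly a different one.
-/

lemma add_sub_one_mod {n : ℕ} (hn : 0 < n) (m : ℕ) :
    (m + n - 1) % n = if m % n = 0 then n - 1 else m % n - 1 := by
  have hlt := Nat.mod_lt m hn
  rw [Nat.add_sub_assoc hn, Nat.add_mod, Nat.mod_eq_of_lt (show n - 1 < n by omega)]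
  split_ifs with h
  · rw [h, zero_add, Nat.mod_eq_of_lt (by omega)]
  · rw [show m % n + (n - 1) = m % n - 1 + n by omega, Nat.add_mod_right,
      Nat.mod_eq_of_lt (by omega)]

lemma map_range_add_two {α : Type*} (f : ℕ → α) (m : ℕ) :
    (List.range (m + 2)).map f = f 0 :: (List.range m).map (fun i => f (i + 1)) ++ [f (m + 1)] := by
  rw [List.range_succ, List.range_succ_eq_map]
  simp [Function.comp_def]

/-- The label `k * b mod (a + b)` of the vertex reached after `k` letters along the Christoffel
path of slope `(a, b)`; the labels run through the cycle `0, b, 2b, …` of the Cayley graph of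
`ℤ/(a+b)` generated by `b`. -/
def label (a b k : ℕ) : ℕ := k * b % (a + b)

/-- The central word of slope `(a, b)`, for coprime `a` and `b` the common interior of the lower and
upper Christoffel words. Its 0-based letter `i` is read off the label of position `i + 1`, since the
interior starts after the first letter. -/
def centralWord (a b : ℕ) : List Bool :=
  (List.range (a + b - 2)).map fun i => decide (a < label a b (i + 1))

/-- The pairs `(a, b)` and `(p, q)` have a common sum, modulo which `p` is the inverse of `b`.
Then `(a, b)` and `(q, p)`, in this order, are the slopes of dual Christoffel words, and `p` and `q`
are periods of `centralWord a b`. -/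
structure IsDualPair (a b p q : ℕ) : Prop where
  add_eq_add : a + b = p + q
  mul_mod_eq_one : p * b % (a + b) = 1

section Label

variable {a b : ℕ}

lemma pos_of_coprime_of_two_le_add (h : a.Coprime b) (hn : 2 ≤ a + b) : 0 < a ∧ 0 < b := by
  constructor <;> refine Nat.pos_of_ne_zero ?_ <;> rintro rfl <;>
    simp only [Nat.coprime_zero_left, Nat.coprime_zero_right] at h <;> omega

@[simp]
lemma label_zero (a b : ℕ) : label a b 0 = 0 := by simp [label]

lemma label_lt (hn : 0 < a + b) (k : ℕ) : label a b k < a + b := Nat.mod_lt _ hn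

lemma label_add_sub_one (hb : 0 < b) : label a b (a + b - 1) = a := by
  obtain ⟨c, rfl⟩ := Nat.exists_eq_add_one_of_ne_zero hb.ne'
  have hmul : (a + (c + 1) - 1) * (c + 1) = a + (a + (c + 1)) * c := by
    rw [← add_assoc, Nat.add_sub_cancel]; ring
  rw [label, hmul, Nat.add_mul_mod_self_left, Nat.mod_eq_of_lt (by omega)]

lemma eq_of_label_eq_label (h : a.Coprime b) {i j : ℕ} (hi : i < a + b) (hj : j < a + b)
    (hij : label a b i = label a b j) : i = j :=
  (Nat.ModEq.cancel_right_of_coprime (by simpa using h) hij).eq_of_lt_of_lt hi hj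

lemma exists_label_eq (h : a.Coprime b) {r : ℕ} (hr : r < a + b) :
    ∃ k < a + b, label a b k = r := by
  obtain ⟨k, hk, hkr⟩ := Nat.exists_mul_mod_eq_of_coprime (n := b) (k := a + b) r
    (by simpa using h.symm) (by omega)
  exact ⟨k, hk, by rw [label, mul_comm, hkr, Nat.mod_eq_of_lt hr]⟩

lemma label_succ_ne (h : a.Coprime b) {i : ℕ} (hi : i + 2 < a + b) :
    label a b (i + 1) ≠ 0 ∧ label a b (i + 1) ≠ a := by
  obtain ⟨-, hb⟩ := pos_of_coprime_of_two_le_add h (by omega)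
  constructor <;> intro hlabel
  · have := eq_of_label_eq_label h (by omega) (by omega) (hlabel.trans (label_zero a b).symm)
    omega
  · have := eq_of_label_eq_label h (by omega) (by omega) (hlabel.trans (label_add_sub_one hb).symm)
    omega

lemma exists_label_succ_eq (h : a.Coprime b) {r : ℕ} (hr : r < a + b) (hr0 : r ≠ 0) (hra : r ≠ a) :
    ∃ i, i + 2 < a + b ∧ label a b (i + 1) = r := by
  obtain ⟨_ | i, hk, rfl⟩ := exists_label_eq h hr
  · simp at hr0
  · refine ⟨i, ?_, rfl⟩
    by_contra hlast
    obtain rfl | hb := b.eq_zero_or_pos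
    · simp [label] at hr0
    · exact hra (by rw [show i + 1 = a + b - 1 by omega, label_add_sub_one hb])

lemma label_swap {k : ℕ} (hk : label a b k ≠ 0) : label b a k = a + b - label a b k := by
  obtain hn | hn := (a + b).eq_zero_or_pos
  · obtain ⟨rfl, rfl⟩ := Nat.add_eq_zero_iff.1 hn
    simp [label] at hk
  have hdvd : a + b ∣ label b a k + label a b k := by
    rw [Nat.dvd_iff_mod_eq_zero, label, label, add_comm b a, ← Nat.add_mod, ← mul_add,
      Nat.mul_mod_left]
  have hlt := label_lt (a := b) (b := a) (by omega) k
  have hlt' := label_lt hn k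
  have := Nat.eq_of_dvd_of_lt_two_mul (by omega) hdvd (by omega)
  omega

end Label

section Christoffel

variable {a b : ℕ}

lemma lower_letter_iff (ha : 0 < a) (k : ℕ) :
    (k + 1) * b / (a + b) ≠ k * b / (a + b) ↔ a ≤ label a b k := by
  have hb : b < a + b := by omega
  rw [add_mul, one_mul, Nat.add_div (by omega), Nat.div_eq_of_lt hb, Nat.mod_eq_of_lt hb, label]
  split_ifs <;> omega

lemma upper_letter_iff (ha : 0 < a) (hb : 0 < b) (k : ℕ) :
    ((k + 1) * b + (a + b) - 1) / (a + b) ≠ (k * b + (a + b) - 1) / (a + b) ↔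
      label a b k = 0 ∨ a < label a b k := by
  have hn : 0 < a + b := by omega
  have hb' : b < a + b := by omega
  rw [show (k + 1) * b + (a + b) - 1 = (k * b + (a + b) - 1) + b by rw [add_mul]; omega,
    Nat.add_div hn, Nat.div_eq_of_lt hb', Nat.mod_eq_of_lt hb', add_sub_one_mod hn, ← label]
  split_ifs <;> omega

lemma map_range_eq_centralWord {f : ℕ → Bool} (hn : 2 ≤ a + b)
    (hf : ∀ i, i + 2 < a + b → f (i + 1) = decide (a < label a b (i + 1))) :
    (List.range (a + b)).map f = f 0 :: centralWord a b ++ [f (a + b - 1)] := by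
  obtain ⟨m, hm⟩ := Nat.exists_eq_add_of_le' hn
  simp only [centralWord, hm, map_range_add_two, Nat.add_sub_cancel]
  congr 2
  exact List.map_congr_left fun i hi => hf i (by have := List.mem_range.1 hi; omega)

theorem lowerChristoffel_eq_centralWord (h : a.Coprime b) (hn : 2 ≤ a + b) :
    lowerChristoffel a b = false :: centralWord a b ++ [true] := by
  obtain ⟨ha, hb⟩ := pos_of_coprime_of_two_le_add h hn
  simp only [lowerChristoffel, lower_letter_iff ha]
  rw [map_range_eq_centralWord hn]
  · simp [label_add_sub_one hb, ha.ne']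
  · intro i hi
    have := label_succ_ne h hi
    simp only [decide_eq_decide]
    omega

theorem upperChristoffel_eq_centralWord (h : a.Coprime b) (hn : 2 ≤ a + b) :
    upperChristoffel a b = true :: centralWord a b ++ [false] := by
  obtain ⟨ha, hb⟩ := pos_of_coprime_of_two_le_add h hn
  simp only [upperChristoffel, upper_letter_iff ha hb]
  rw [map_range_eq_centralWord hn]
  · simp [label_add_sub_one hb, ha.ne']
  · intro i hi
    have := label_succ_ne h hi
    simp only [decide_eq_decide]
    omega

end Christoffel

section CentralWord

@[simp]
lemma length_centralWord (a b : ℕ) : (centralWord a b).length = a + b - 2 := by simp [centralWord]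

lemma eq_map_centralWord_iff {C : List Bool} {a b : ℕ} (hC : C.length = a + b - 2)
    (g : Bool → Bool) :
    C = (centralWord a b).map g ↔
      ∀ i < C.length, C.getD i false = g (decide (a < label a b (i + 1))) := by
  simp +contextual [List.ext_getElem_iff, hC, centralWord]

lemma map_not_centralWord {a b : ℕ} (h : a.Coprime b) :
    (centralWord a b).map (!·) = centralWord b a := by
  rw [centralWord, centralWord, List.map_map, add_comm b a]
  refine List.map_congr_left fun i hi => ?_
  have hi : i + 2 < a + b := by have := List.mem_range.1 hi; omega
  have hne := label_succ_ne h hi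
  have hlt := label_lt (a := a) (b := b) (by omega) (i + 1)
  simp only [Function.comp_apply, label_swap hne.1, ← decide_not, decide_eq_decide]
  omega

lemma centralWord_one_right (m : ℕ) : centralWord (m + 1) 1 = List.replicate m false := by
  refine List.eq_replicate_iff.2 ⟨by simp, ?_⟩
  simp only [centralWord, List.mem_map, List.mem_range]
  rintro _ ⟨i, hi, rfl⟩
  have hlabel : label (m + 1) 1 (i + 1) = i + 1 := by
    rw [label, mul_one, Nat.mod_eq_of_lt (by omega)]
  rw [hlabel, decide_eq_false_iff_not]
  omega

lemma centralWord_one_left (m : ℕ) : centralWord 1 (m + 1) = List.replicate m true := by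
  simp [← map_not_centralWord (Nat.coprime_one_right (m + 1)), centralWord_one_right]

lemma exists_centralWord_eq_map {a b : ℕ} (h : a.Coprime b) (hn : 2 ≤ a + b) (g : Bool → Bool) :
    ∃ a' b', a'.Coprime b' ∧ 2 ≤ a' + b' ∧ (centralWord a b).map g = centralWord a' b' := by
  obtain rfl | rfl | rfl | rfl :
      g = id ∨ g = (!·) ∨ g = (fun _ => false) ∨ g = (fun _ => true) := by
    decide +revert
  · exact ⟨a, b, h, hn, List.map_id _⟩
  · exact ⟨b, a, h.symm, by omega, map_not_centralWord h⟩
  · exact ⟨a + b - 2 + 1, 1, by simp, by omega, by simp [centralWord_one_right]⟩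
  · exact ⟨1, a + b - 2 + 1, by simp, by omega, by simp [centralWord_one_left]⟩

end CentralWord

namespace IsDualPair

variable {a b p q : ℕ}

lemma symm (h : IsDualPair a b p q) : IsDualPair q p b a where
  add_eq_add := by have := h.add_eq_add; omega
  mul_mod_eq_one := by rw [add_comm q p, ← h.add_eq_add, mul_comm, h.mul_mod_eq_one]

lemma modEq (h : IsDualPair a b p q) : p * b ≡ 1 [MOD a + b] := by
  simpa [h.mul_mod_eq_one] using (Nat.mod_modEq (p * b) (a + b)).symm

lemma coprime (h : IsDualPair a b p q) : a.Coprime b := by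
  have : b.Coprime (a + b) := Nat.coprime_of_mul_modEq_one p (by rw [mul_comm]; exact h.modEq)
  simpa using this.symm

lemma right_pos (h : IsDualPair a b p q) : 0 < q := by
  refine Nat.pos_of_ne_zero ?_
  rintro rfl
  have := h.mul_mod_eq_one
  rw [h.add_eq_add, add_zero, Nat.mul_mod_right] at this
  omega

lemma left_pos (h : IsDualPair a b p q) : 0 < p := by
  refine Nat.pos_of_ne_zero ?_
  rintro rfl
  simpa using h.mul_mod_eq_one

lemma exists_of_coprime (h : a.Coprime b) (hn : 2 ≤ a + b) : ∃ p q, IsDualPair a b p q := by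
  obtain ⟨p, hp, hpb⟩ := Nat.exists_mul_mod_eq_one_of_coprime (n := b) (k := a + b)
    (by simpa using h.symm) hn
  exact ⟨p, a + b - p, by omega, by rw [mul_comm, hpb]⟩

lemma modEq_add_iff (h : IsDualPair a b p q) {i j : ℕ} (hi : i < a + b) (hj : j < a + b) :
    j ≡ i + p [MOD a + b] ↔ j = i + p ∨ i = j + q := by
  have hsum := h.add_eq_add
  have hq := h.right_pos
  rw [Nat.ModEq, Nat.mod_eq_of_lt hj]
  obtain hlt | hge := lt_or_ge (i + p) (a + b)
  · rw [Nat.mod_eq_of_lt hlt]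
    omega
  · rw [Nat.mod_eq_sub_mod hge, Nat.mod_eq_of_lt (by omega)]
    omega

lemma label_eq_label_add_one_iff (h : IsDualPair a b p q) {i j : ℕ} (hi : i < a + b)
    (hj : j < a + b) (hj0 : label a b j ≠ 0) :
    label a b j = label a b i + 1 ↔ j = i + p ∨ i = j + q := by
  rw [← h.modEq_add_iff hi hj]
  have hn : 0 < a + b := by omega
  have hcop : (a + b).gcd b = 1 := by simpa using h.coprime
  have hmul : (i + p) * b ≡ label a b i + 1 [MOD a + b] := by
    rw [add_mul]
    exact (Nat.mod_modEq _ _).symm.add h.modEq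
  have hmod : label a b j = (label a b i + 1) % (a + b) ↔ j ≡ i + p [MOD a + b] :=
    ⟨fun e => Nat.ModEq.cancel_right_of_coprime hcop (Nat.ModEq.trans e hmul.symm),
      fun e => (e.mul_right b).trans hmul⟩
  rw [← hmod]
  obtain hlt | heq : label a b i + 1 < a + b ∨ label a b i + 1 = a + b := by
    have := label_lt hn i
    omega
  · rw [Nat.mod_eq_of_lt hlt]
  · have := label_lt hn j
    rw [heq, Nat.mod_self]
    omega

lemma hasPeriod_iff_getD_eq_of_label_eq_add_one (h : IsDualPair a b p q) {C : List Bool}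
    (hC : C.length + 2 = a + b) :
    HasPeriod C p ∧ HasPeriod C q ↔
      ∀ i < C.length, ∀ j < C.length, label a b (j + 1) = label a b (i + 1) + 1 →
        C.getD i false = C.getD j false := by
  have hstep : ∀ i < C.length, ∀ j < C.length,
      (label a b (j + 1) = label a b (i + 1) + 1 ↔ j = i + p ∨ i = j + q) := fun i hi j hj => by
    rw [h.label_eq_label_add_one_iff (by omega) (by omega) (label_succ_ne h.coprime (by omega)).1]
    omega
  constructor
  · rintro ⟨⟨-, hp⟩, ⟨-, hq⟩⟩ i hi j hj hij
    obtain rfl | rfl := (hstep i hi j hj).1 hij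
    · exact hp i hj
    · exact (hq j hi).symm
  · intro hconst
    refine ⟨⟨h.left_pos, fun i hi => ?_⟩, ⟨h.right_pos, fun i hi => ?_⟩⟩
    · exact hconst _ (by omega) _ hi ((hstep _ (by omega) _ hi).2 (.inl rfl))
    · exact (hconst _ hi _ (by omega) ((hstep _ hi _ (by omega)).2 (.inr rfl))).symm

end IsDualPair

lemma getD_eq_getD_of_lt_label_iff {a b : ℕ} (h : a.Coprime b) {C : List Bool}
    (hC : C.length + 2 = a + b)
    (hstep : ∀ i < C.length, ∀ j < C.length, label a b (j + 1) = label a b (i + 1) + 1 →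
      C.getD i false = C.getD j false)
    {i j : ℕ} (hi : i < C.length) (hj : j < C.length)
    (hside : a < label a b (i + 1) ↔ a < label a b (j + 1)) :
    C.getD i false = C.getD j false := by
  wlog hle : label a b (i + 1) ≤ label a b (j + 1) generalizing i j
  · exact (this hj hi hside.symm (by omega)).symm
  obtain ⟨d, hd⟩ := Nat.exists_eq_add_of_le hle
  clear hle
  induction d generalizing j with
  | zero =>
    have := eq_of_label_eq_label h (i := i + 1) (j := j + 1) (by omega) (by omega) hd.symm
    rw [Nat.succ_injective this]
  | succ d ih =>
    have hi' := label_succ_ne h (i := i) (by omega)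
    have hj' := label_succ_ne h (i := j) (by omega)
    have hjlt := label_lt (a := a) (b := b) (by omega) (j + 1)
    obtain ⟨k, hk, hkd⟩ := exists_label_succ_eq h (r := label a b (i + 1) + d)
      (by omega) (by omega) (by omega)
    exact (ih (j := k) (by omega) (by omega) hkd).trans (hstep k (by omega) j hj (by omega))

theorem IsDualPair.hasPeriod_iff_exists_eq_map {a b p q : ℕ} (h : IsDualPair a b p q)
    {C : List Bool} (hC : C.length + 2 = a + b) :
    HasPeriod C p ∧ HasPeriod C q ↔ ∃ g : Bool → Bool, C = (centralWord a b).map g := by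
  have hlen : C.length = a + b - 2 := by omega
  simp only [h.hasPeriod_iff_getD_eq_of_label_eq_add_one hC, eq_map_centralWord_iff hlen]
  constructor
  · intro hstep
    have hfactor : Function.FactorsThrough (fun i : Fin C.length => C.getD i false)
        fun i => decide (a < label a b (i + 1)) := fun i j hij =>
      getD_eq_getD_of_lt_label_iff h.coprime hC hstep i.2 j.2 (by simpa using hij)
    obtain ⟨g, hg⟩ := (Function.factorsThrough_iff _).1 hfactor
    exact ⟨g, fun i hi => congrFun hg ⟨i, hi⟩⟩
  · rintro ⟨g, hg⟩ i hi j hj hij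
    have hne := (label_succ_ne h.coprime (i := i) (by omega)).2
    have hside : a < label a b (i + 1) ↔ a < label a b (j + 1) := by omega
    rw [hg i hi, hg j hj, decide_eq_decide.2 hside]

theorem isCentral_centralWord {a b : ℕ} (h : a.Coprime b) (hn : 2 ≤ a + b) :
    IsCentral (centralWord a b) := by
  obtain ⟨p, q, hdual⟩ := IsDualPair.exists_of_coprime h hn
  have hlen : (centralWord a b).length + 2 = a + b := by rw [length_centralWord]; omega
  obtain ⟨hp, hq⟩ := (hdual.hasPeriod_iff_exists_eq_map hlen).2 ⟨id, (List.map_id _).symm⟩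
  exact ⟨p, q, hdual.symm.coprime.symm, hp, hq, hlen.trans hdual.add_eq_add⟩

theorem IsCentral.exists_eq_centralWord {C : List Bool} (hC : IsCentral C) :
    ∃ a b, a.Coprime b ∧ 2 ≤ a + b ∧ C = centralWord a b := by
  obtain ⟨p, q, hpq, hp, hq, hlen⟩ := hC
  have hn : 2 ≤ q + p := Nat.add_le_add hq.1 hp.1
  obtain ⟨b, a, hdual⟩ := IsDualPair.exists_of_coprime hpq.symm hn
  replace hdual := hdual.symm
  have hsum := hdual.add_eq_add
  obtain ⟨g, rfl⟩ := (hdual.hasPeriod_iff_exists_eq_map (by omega)).1 ⟨hp, hq⟩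
  exact exists_centralWord_eq_map hdual.coprime (by omega) g

lemma exists_coprime_eq_iff_length_eq_one_or {F : ℕ → ℕ → List Bool} {u v : Bool}
    (h10 : F 1 0 = [false]) (h01 : F 0 1 = [true])
    (hF : ∀ a b, a.Coprime b → 2 ≤ a + b → F a b = u :: centralWord a b ++ [v]) (w : List Bool) :
    (∃ a b, a.Coprime b ∧ w = F a b) ↔
      w.length = 1 ∨ ∃ C, IsCentral C ∧ w = u :: C ++ [v] := by
  constructor
  · rintro ⟨a, b, h, rfl⟩
    obtain hn | hn := lt_or_ge (a + b) 2
    · obtain ⟨rfl, rfl⟩ | ⟨rfl, rfl⟩ | ⟨rfl, rfl⟩ :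
          (a = 1 ∧ b = 0) ∨ (a = 0 ∧ b = 1) ∨ (a = 0 ∧ b = 0) := by omega
      · simp [h10]
      · simp [h01]
      · simp at h
    · exact .inr ⟨_, isCentral_centralWord h hn, hF a b h hn⟩
  · rintro (hw | ⟨C, hC, rfl⟩)
    · obtain ⟨_ | _, rfl⟩ := List.length_eq_one_iff.1 hw
      · exact ⟨1, 0, by simp, h10.symm⟩
      · exact ⟨0, 1, by simp, h01.symm⟩
    · obtain ⟨a, b, h, hn, rfl⟩ := hC.exists_eq_centralWord
      exact ⟨a, b, h, (hF a b h hn).symm⟩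

/-- A binary word is a primitive lower (resp. upper) Christoffel word iff
it has length 1 or has the form `0·C·1` (resp. `1·C·0`) for a central word `C`. -/
theorem stmt2 (w : List Bool) :
    ((∃ a b : ℕ, Nat.Coprime a b ∧ w = lowerChristoffel a b) ↔
      (w.length = 1 ∨ ∃ C : List Bool, IsCentral C ∧ w = false :: C ++ [true])) ∧
    ((∃ a b : ℕ, Nat.Coprime a b ∧ w = upperChristoffel a b) ↔
      (w.length = 1 ∨ ∃ C : List Bool, IsCentral C ∧ w = true :: C ++ [false])) := by
  exact ⟨exists_coprime_eq_iff_length_eq_one_or (by decide) (by decide)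
      (fun _ _ => lowerChristoffel_eq_centralWord) w,
    exists_coprime_eq_iff_length_eq_one_or (by decide) (by decide)
      (fun _ _ => upperChristoffel_eq_centralWord) w⟩
end

section
/- Let a, b be coprime positive integers and n = a + b, and write the lower Christoffel word w_{a,b} = 0·C·1 (C is the word obtained from w_{a,b} by removing its first and last letters). Then C has periods a' and b', where a' (respectively b') is the unique integer with 1 ≤ a' ≤ n−1 and a·a' ≡ 1 (mod n) (respectively 1 ≤ b' ≤ n−1 and b·b' ≡ 1 (mod n)). -/
/-!
Writing `n = a + b`, the letter of `w_{a,b}` at the 0-based position `k` is `1` exactly when the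
residue of `k * b` modulo `n` lies in `[a, n)`. Raising a residue by `1` changes membership in this
interval only when the new residue is `0` or `a`; for residues `k * b` this means `k ≡ 0` or
`k ≡ -1`, which are the positions of the first and last letters that are removed to form `C`.
Moving by `b'` positions raises the residue by `1`, and since `b ≡ -a`, moving by `a'` positions
lowers it by `1`.
-/

lemma getD_tail_dropLast {α : Type*} {w : List α} {i : ℕ} (hi : i + 2 < w.length) (d : α) :
    w.tail.dropLast.getD i d = w.getD (i + 1) d := by
  rw [List.getD_eq_getElem _ _ (by grind), List.getD_eq_getElem _ _ (by omega)]
  simp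

lemma hasPeriod_tail_dropLast_iff {w : List Bool} {p : ℕ} :
    HasPeriod w.tail.dropLast p ↔
      0 < p ∧ ∀ k, 0 < k → k + p + 1 < w.length → w.getD k false = w.getD (k + p) false := by
  refine and_congr_right fun _ => ⟨fun h k hk hkp => ?_, fun h i hi => ?_⟩
  · obtain ⟨i, rfl⟩ := Nat.exists_eq_add_of_le' hk
    have := h i (by grind)
    rwa [getD_tail_dropLast (by omega), getD_tail_dropLast (by omega),
      Nat.add_right_comm] at this
  · have hi' : i + p + 2 < w.length := by grind
    rw [getD_tail_dropLast (by omega), getD_tail_dropLast hi', Nat.add_right_comm]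
    exact h (i + 1) i.succ_pos (by omega)

lemma add_div_ne_div_iff {n : ℕ} (hn : 0 < n) (x b : ℕ) :
    (x + b) / n ≠ x / n ↔ n ≤ x % n + b := by
  have hdiv : (x + b) / n = x / n + (x % n + b) / n := by
    conv_lhs => rw [← Nat.div_add_mod x n, add_assoc, Nat.mul_add_div hn]
  rw [hdiv, Ne, Nat.add_eq_left, Nat.div_eq_zero_iff_lt hn, not_lt]

lemma le_mod_iff_of_modEq_succ {n a x y : ℕ} (h : y ≡ x + 1 [MOD n]) (h0 : y % n ≠ 0)
    (ha : y % n ≠ a) : a ≤ x % n ↔ a ≤ y % n := by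
  obtain rfl | hn := n.eq_zero_or_pos
  · simp only [Nat.modEq_zero_iff, Nat.mod_zero] at h ha ⊢
    omega
  have hmod : y % n = (x % n + 1) % n := by rw [Nat.mod_add_mod, h]
  obtain hlt | heq := (Nat.succ_le_of_lt (Nat.mod_lt x hn)).lt_or_eq
  · rw [Nat.mod_eq_of_lt hlt] at hmod
    omega
  · rw [← Nat.succ_eq_add_one, heq, Nat.mod_self] at hmod
    exact absurd hmod h0

lemma length_lowerChristoffel (a b : ℕ) : (lowerChristoffel a b).length = a + b := by
  simp [lowerChristoffel]

lemma getD_lowerChristoffel {a b k : ℕ} (hk : k < a + b) :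
    (lowerChristoffel a b).getD k false = decide (a ≤ k * b % (a + b)) := by
  have hletter : (k + 1) * b / (a + b) ≠ k * b / (a + b) ↔ a ≤ k * b % (a + b) := by
    rw [add_one_mul, add_div_ne_div_iff (by omega), Nat.add_le_add_iff_right]
  rw [List.getD_eq_getElem _ _ (by rwa [length_lowerChristoffel])]
  simp only [lowerChristoffel, List.getElem_map, List.getElem_range, hletter]

lemma getD_lowerChristoffel_eq_of_modEq {a b i j : ℕ} (hab : Nat.Coprime a b) (hi : i < a + b)
    (hj : 0 < j) (hj' : j + 1 < a + b) (h : j * b ≡ i * b + 1 [MOD a + b]) :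
    (lowerChristoffel a b).getD i false = (lowerChristoffel a b).getD j false := by
  have hdvd {k : ℕ} (hk : (a + b) ∣ k * b) : (a + b) ∣ k :=
    (Nat.coprime_add_self_left.mpr hab).dvd_of_dvd_mul_right hk
  have h_ne_zero : j * b % (a + b) ≠ 0 := fun h0 =>
    Nat.not_dvd_of_pos_of_lt hj (by omega) (hdvd (Nat.dvd_of_mod_eq_zero h0))
  have h_ne_left : j * b % (a + b) ≠ a := fun h_eq => by
    have hlast : (a + b) ∣ (j + 1) * b := by
      rw [Nat.dvd_iff_mod_eq_zero, add_one_mul, ← Nat.mod_add_mod, h_eq, Nat.mod_self]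
    exact Nat.not_dvd_of_pos_of_lt j.succ_pos hj' (hdvd hlast)
  rw [getD_lowerChristoffel hi, getD_lowerChristoffel (by omega), decide_eq_decide]
  exact le_mod_iff_of_modEq_succ h h_ne_zero h_ne_left

lemma hasPeriod_tail_dropLast_lowerChristoffel_of_left_mul_modEq_one {a b p : ℕ} (hp : 0 < p)
    (h : a * p ≡ 1 [MOD a + b]) : HasPeriod (lowerChristoffel a b).tail.dropLast p := by
  have hab : Nat.Coprime a b := by simpa using Nat.coprime_of_mul_modEq_one p h
  rw [hasPeriod_tail_dropLast_iff, length_lowerChristoffel]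
  refine ⟨hp, fun k hk hkp => Eq.symm ?_⟩
  have hres : k * b ≡ (k + p) * b + 1 [MOD a + b] := calc
    k * b ≡ k * b + (a + b) * p [MOD a + b] := Nat.ModEq.symm (by simp [Nat.ModEq])
    _ = (k + p) * b + a * p := by ring
    _ ≡ (k + p) * b + 1 [MOD a + b] := h.add_left _
  exact getD_lowerChristoffel_eq_of_modEq hab (by omega) hk (by omega) hres

lemma hasPeriod_tail_dropLast_lowerChristoffel_of_right_mul_modEq_one {a b p : ℕ} (hp : 0 < p)
    (h : b * p ≡ 1 [MOD a + b]) : HasPeriod (lowerChristoffel a b).tail.dropLast p := by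
  have hab : Nat.Coprime a b := by simpa [Nat.coprime_comm] using Nat.coprime_of_mul_modEq_one p h
  rw [hasPeriod_tail_dropLast_iff, length_lowerChristoffel]
  refine ⟨hp, fun k _ hkp => ?_⟩
  have hres : (k + p) * b ≡ k * b + 1 [MOD a + b] := calc
    (k + p) * b = k * b + b * p := by ring
    _ ≡ k * b + 1 [MOD a + b] := h.add_left _
  exact getD_lowerChristoffel_eq_of_modEq hab (by omega) (by omega) hkp hres

/-- If `w_{a,b} = 0·C·1` with `a, b` coprime positive integers and
`n = a + b`, then `C` has periods `a'` and `b'`, the multiplicative inverses of `a` and `b`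
modulo `n`. -/
theorem stmt3 (a b a' b' : ℕ) (ha : 0 < a) (hb : 0 < b) (hab : Nat.Coprime a b)
    (ha' : 1 ≤ a' ∧ a' ≤ a + b - 1 ∧ a * a' % (a + b) = 1)
    (hb' : 1 ≤ b' ∧ b' ≤ a + b - 1 ∧ b * b' % (a + b) = 1) :
    HasPeriod ((lowerChristoffel a b).tail.dropLast) a' ∧
    HasPeriod ((lowerChristoffel a b).tail.dropLast) b' := by
  obtain ⟨ha'_pos, -, haa'⟩ := ha'
  obtain ⟨hb'_pos, -, hbb'⟩ := hb'
  have hn : 1 < a + b := by omega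
  exact ⟨hasPeriod_tail_dropLast_lowerChristoffel_of_left_mul_modEq_one ha'_pos
      (haa'.trans (Nat.mod_eq_of_lt hn).symm),
    hasPeriod_tail_dropLast_lowerChristoffel_of_right_mul_modEq_one hb'_pos
      (hbb'.trans (Nat.mod_eq_of_lt hn).symm)⟩
end

section
/- For positive integers α, β and n, let N_{α,β}(n) denote the number of distinct factors of w_{α,β}^ω having length n and minimal period α+β. Then: N_{α,β}(n) = 0 if gcd(α,β) > 1 or n < α+β; N_{α,β}(n) = 2(n−α−β+1) if gcd(α,β) = 1 and α+β ≤ n < α+β+min{α',β'}; N_{α,β}(n) = n − max{α',β'} + 1 if gcd(α,β) = 1 and α+β+min{α',β'} ≤ n < α+β+max{α',β'}; and N_{α,β}(n) = α+β if gcd(α,β) = 1 and n ≥ α+β+max{α',β'}. Here α' (respectively β') is the multiplicative inverse of α (respectively β) modulo α+β, taken in {1,…,α+β−1}. -/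
/-- `N_{α,β}(n)`: the number of distinct factors of `w_{α,β}^ω` of length `n` and minimal
period `α + β`. -/
noncomputable def NFactors (α β n : ℕ) : ℕ :=
  Set.ncard {u : List Bool |
    IsOmegaFactor u (lowerChristoffel α β) ∧ u.length = n ∧ IsMinPeriod u (α + β)}

/-!
Write `p = α + β`, suppose `gcd(α, β) = 1`, and label position `x` of `w_{α,β}^ω` by `xβ mod p`.
The letter there is `1` iff the label is at least `α`, and adding `α'` to a position lowers its
label by one, so the letters at `x` and `x + α'` agree unless the label of `x` or of `x + 1` is
`0`.

The length-`p` windows at the position labelled `0` (the lower Christoffel word) and at the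
position `α'`, labelled `p - 1` (the upper one), are unbordered, so a factor containing either has
minimal period `p`. A factor of length at least `p` avoiding both stays clear of the exceptional
positions, so it has period `α'` or `β' = p - α'`, both smaller than `p`. The starting points in
`(0, p]` of the factors of length `p + m` that reach the window at `α'` or at `p` form two disjoint
intervals of sizes `min (m + 1) α'` and `min (m + 1) β'`.
-/

open Function Set

section Words

theorem hasPeriod_iff_list_hasPeriod {w : List Bool} {q : ℕ} :
    HasPeriod w q ↔ 0 < q ∧ w.HasPeriod q := by
  rw [HasPeriod, List.hasPeriod_iff_getElem?]
  refine and_congr_right fun _ => forall_congr' fun i => ?_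
  rw [← Nat.lt_sub_iff_add_lt]
  refine imp_congr_right fun hi => ?_
  simp [List.getElem?_eq_getElem (show i < w.length by omega),
    List.getElem?_eq_getElem (show i + q < w.length by omega)]

theorem HasPeriod.of_isInfix {u w : List Bool} {q : ℕ} (hw : HasPeriod w q) (h : u <:+: w) :
    HasPeriod u q :=
  hasPeriod_iff_list_hasPeriod.2
    ((hasPeriod_iff_list_hasPeriod.1 hw).imp_right fun hq => hq.infix h)

theorem hasPeriod_of_length_le {w : List Bool} {q : ℕ} (hq : 0 < q) (h : w.length ≤ q) :
    HasPeriod w q :=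
  hasPeriod_iff_list_hasPeriod.2 ⟨hq, w.hasPeriod_of_length_le q h⟩

/-- A word is unbordered if no proper nonempty prefix is also a suffix. This is encoded through
periods, since a word of length `n` has a border of length `n - q` iff it has period `q`. -/
def IsUnbordered (w : List Bool) : Prop := ∀ q, HasPeriod w q → w.length ≤ q

theorem IsUnbordered.isMinPeriod_of_isInfix {u v : List Bool} {p : ℕ} (hv : IsUnbordered v)
    (hvp : v.length = p) (hvu : v <:+: u) (hu : HasPeriod u p) : IsMinPeriod u p :=
  ⟨hu, fun q hq => hvp ▸ hv q (hq.of_isInfix hvu)⟩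

end Words

section Windows

/-- The factor `f j, f (j + 1), …, f (j + n - 1)` of the infinite word `f`; the factors of `w^ω`
are studied as windows of a periodic function. -/
def window {A : Type*} (f : ℕ → A) (j n : ℕ) : List A := (List.range' j n).map f

variable {A : Type*} {f : ℕ → A} {j k n p : ℕ}

@[simp]
theorem length_window : (window f j n).length = n := by simp [window]

@[simp]
theorem getElem_window {i : ℕ} (hi : i < (window f j n).length) :
    (window f j n)[i] = f (j + i) := by
  simp [window]

theorem window_append : window f j n ++ window f (j + n) k = window f j (n + k) := by
  simp only [window, ← List.map_append, List.range'_append_1]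

theorem window_isInfix_window (hkj : k ≤ j) (hn : j + n ≤ k + p) :
    window f j n <:+: window f k p := by
  refine ⟨window f k (j - k), window f (j + n) (k + p - (j + n)), ?_⟩
  obtain ⟨d, rfl⟩ := Nat.exists_eq_add_of_le hkj
  rw [Nat.add_sub_cancel_left, window_append, add_assoc k d n, window_append]
  congr 1
  omega

theorem exists_eq_window_of_isInfix {u : List A} (h : u <:+: window f j n) :
    ∃ t, u = window f t u.length := by
  obtain ⟨k, hk, hget⟩ := List.infix_iff_getElem?.1 h
  rw [length_window] at hk
  refine ⟨j + k, List.ext_getElem (by simp) fun i hi _ => ?_⟩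
  have := hget i hi
  rw [List.getElem?_eq_getElem (by simp; omega), Option.some_inj, getElem_window] at this
  rw [← this, getElem_window]
  congr 1
  omega

theorem apply_eq_of_modEq (hf : Periodic f p) (h : j ≡ k [MOD p]) : f j = f k := by
  rw [← hf.map_mod_nat j, h, hf.map_mod_nat]

theorem window_eq_of_modEq (hf : Periodic f p) (h : j ≡ k [MOD p]) :
    window f j n = window f k n :=
  List.ext_getElem (by simp) fun i _ _ => by
    simpa using apply_eq_of_modEq hf (h.add_right i)

theorem exists_mem_Ioc_modEq (hp : 0 < p) (t : ℕ) : ∃ j ∈ Ioc 0 p, t ≡ j [MOD p] := by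
  refine ⟨(t + (p - 1)) % p + 1, ⟨by omega, Nat.mod_lt _ hp⟩, ?_⟩
  calc t ≡ t + p [MOD p] := (Nat.add_mod_right t p).symm
    _ = t + (p - 1) + 1 := by omega
    _ ≡ (t + (p - 1)) % p + 1 [MOD p] := (Nat.mod_modEq _ _).symm.add_right 1

theorem wpow_window {f : ℕ → Bool} (hf : Periodic f p) (m : ℕ) :
    wpow (window f 0 p) m = window f 0 (m * p) := by
  induction m with
  | zero => simp [wpow, window]
  | succ m ih =>
    have hshift : window f 0 p = window f (0 + m * p) p :=
      window_eq_of_modEq hf (by simp [Nat.ModEq])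
    rw [wpow] at ih ⊢
    rw [List.replicate_succ', List.flatten_append, ih, List.flatten_singleton, hshift,
      window_append, Nat.succ_mul]

theorem isOmegaFactor_window_iff {f : ℕ → Bool} (hf : Periodic f p) (hp : 0 < p)
    {u : List Bool} :
    IsOmegaFactor u (window f 0 p) ↔ ∃ j ∈ Ioc 0 p, u = window f j u.length := by
  simp only [IsOmegaFactor, wpow_window hf]
  constructor
  · rintro ⟨m, hm⟩
    obtain ⟨t, ht⟩ := exists_eq_window_of_isInfix hm
    obtain ⟨j, hj, htj⟩ := exists_mem_Ioc_modEq hp t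
    exact ⟨j, hj, ht.trans (window_eq_of_modEq hf htj)⟩
  · rintro ⟨j, -, hu⟩
    refine ⟨j + u.length, ?_⟩
    rw [hu, length_window]
    exact window_isInfix_window (Nat.zero_le j)
      (by simpa using Nat.le_mul_of_pos_right (j + u.length) hp)

theorem hasPeriod_window_iff {f : ℕ → Bool} {q : ℕ} :
    HasPeriod (window f j n) q ↔
      0 < q ∧ ∀ i, i + q < n → f (j + i) = f (j + i + q) := by
  rw [HasPeriod, length_window]
  refine and_congr_right fun _ => forall_congr' fun i => imp_congr_right fun hi => ?_
  rw [List.getD_eq_getElem _ _ (by simp; omega), List.getD_eq_getElem _ _ (by simpa using hi),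
    getElem_window, getElem_window, add_assoc]

theorem hasPeriod_window_of_periodic {f : ℕ → Bool} (hf : Periodic f p) (hp : 0 < p) :
    HasPeriod (window f j n) p :=
  hasPeriod_window_iff.2 ⟨hp, fun i _ => (hf (j + i)).symm⟩

theorem window_injOn_Ioc {f : ℕ → Bool} (hf : Periodic f p) (hw : IsUnbordered (window f 0 p))
    (hn : p ≤ n) : InjOn (fun j => window f j n) (Ioc 0 p) := by
  intro j hj k hk hjk
  wlog hlt : j < k generalizing j k
  · by_contra hne
    exact hne (this hk hj hjk.symm (by omega)).symm
  rw [mem_Ioc] at hj hk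
  have hshift (i : ℕ) (hi : i < p) : f (j + i) = f (k + i) := by
    have := List.getElem_of_eq hjk (i := i) (by simp; omega)
    simpa only [getElem_window] using this
  have hper : HasPeriod (window f 0 p) (k - j) := by
    refine hasPeriod_window_iff.2 ⟨by omega, fun x _ => ?_⟩
    have hmod : (x + (p - j)) % p ≡ x + (p - j) [MOD p] := Nat.mod_modEq _ _
    calc f (0 + x) = f (j + (x + (p - j)) % p) := by
          refine apply_eq_of_modEq hf (((hmod.add_left j).trans ?_).symm)
          rw [show j + (x + (p - j)) = 0 + x + p by omega]
          exact Nat.add_mod_right _ _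
      _ = f (k + (x + (p - j)) % p) := hshift _ (Nat.mod_lt _ (by omega))
      _ = f (0 + x + (k - j)) := by
          refine apply_eq_of_modEq hf ((hmod.add_left k).trans ?_)
          rw [show k + (x + (p - j)) = 0 + x + (k - j) + p by omega]
          exact Nat.add_mod_right _ _
  have := hw _ hper
  rw [length_window] at this
  omega

end Windows

section Christoffel

/-- The label of position `x` of `w_{α,β}^ω`, in the sense of the Cayley graph of `ℤ/(α+β)ℤ` with
generator `β`: the residue of `xβ` in `{0, …, α+β-1}`. -/
def christoffelLabel (α β x : ℕ) : ℕ := x * β % (α + β)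

/-- The letter at the `0`-based position `x` of `w_{α,β}^ω`, read off its label. -/
def christoffelLetter (α β x : ℕ) : Bool := decide (α ≤ christoffelLabel α β x)

variable {α β : ℕ}

theorem christoffelLetter_eq_iff {x y : ℕ} :
    christoffelLetter α β x = christoffelLetter α β y ↔
      (α ≤ christoffelLabel α β x ↔ α ≤ christoffelLabel α β y) :=
  decide_eq_decide

theorem christoffelLabel_lt (hα : 0 < α) (x : ℕ) : christoffelLabel α β x < α + β :=
  Nat.mod_lt _ (by omega)

theorem christoffelLabel_add_eq_or (x y : ℕ) :
    christoffelLabel α β (x + y) = christoffelLabel α β x + christoffelLabel α β y ∨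
      christoffelLabel α β (x + y) + (α + β) =
        christoffelLabel α β x + christoffelLabel α β y := by
  have hadd := Nat.add_mod_add_ite (x * β) (y * β) (α + β)
  rw [← add_mul] at hadd
  split_ifs at hadd with h
  · exact .inr hadd
  · exact .inl hadd

theorem christoffelLabel_one (hα : 0 < α) : christoffelLabel α β 1 = β := by
  rw [christoffelLabel, one_mul, Nat.mod_eq_of_lt (by omega)]

theorem christoffelLabel_eq_zero_iff (hc : Nat.Coprime α β) {x : ℕ} :
    christoffelLabel α β x = 0 ↔ α + β ∣ x := by
  rw [christoffelLabel, ← Nat.dvd_iff_mod_eq_zero]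
  exact (Nat.coprime_add_self_left.2 hc).dvd_mul_right

theorem christoffelLabel_add_sub_one (hα : 0 < α) (hβ : 0 < β) :
    christoffelLabel α β (α + β - 1) = α := by
  have hadd := christoffelLabel_add_eq_or (α := α) (β := β) (α + β - 1) 1
  have hp : christoffelLabel α β (α + β) = 0 := Nat.mul_mod_right _ _
  rw [Nat.sub_add_cancel (by omega), hp, christoffelLabel_one hα] at hadd
  have := christoffelLabel_lt (β := β) hα (α + β - 1)
  omega

theorem christoffelLabel_of_mul_mod_eq_one {a : ℕ} (hα : 0 < α) (ha : α * a % (α + β) = 1) :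
    christoffelLabel α β a = α + β - 1 := by
  have hadd := Nat.add_mod_add_ite (a * β) (α * a) (α + β)
  rw [show a * β + α * a = (α + β) * a by ring, Nat.mul_mod_right, ha] at hadd
  have := christoffelLabel_lt (β := β) hα a
  rw [christoffelLabel] at this ⊢
  split_ifs at hadd <;> omega

theorem inverse_add_inverse_eq {a b : ℕ} (hα : 0 < α) (hc : Nat.Coprime α β)
    (ha : 1 ≤ a ∧ a ≤ α + β - 1 ∧ α * a % (α + β) = 1)
    (hb : 1 ≤ b ∧ b ≤ α + β - 1 ∧ β * b % (α + β) = 1) : a + b = α + β := by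
  have hlabel_a := christoffelLabel_of_mul_mod_eq_one hα ha.2.2
  have hlabel_b : christoffelLabel α β b = 1 := by rw [christoffelLabel, mul_comm, hb.2.2]
  have hadd := christoffelLabel_add_eq_or (α := α) (β := β) a b
  have hlt := christoffelLabel_lt (β := β) hα (a + b)
  have hzero : christoffelLabel α β (a + b) = 0 := by omega
  exact Nat.eq_of_dvd_of_lt_two_mul (by omega) ((christoffelLabel_eq_zero_iff hc).1 hzero)
    (by omega)

theorem periodic_christoffelLetter_div_gcd :
    Periodic (christoffelLetter α β) ((α + β) / Nat.gcd α β) := by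
  intro x
  have hdvd : Nat.gcd α β ∣ α + β := Nat.dvd_add (Nat.gcd_dvd_left α β) (Nat.gcd_dvd_right α β)
  have hmul : (α + β) / Nat.gcd α β * β = (α + β) * (β / Nat.gcd α β) := by
    rw [Nat.div_mul_right_comm hdvd, Nat.mul_div_assoc _ (Nat.gcd_dvd_right α β)]
  rw [christoffelLetter, christoffelLetter, christoffelLabel, christoffelLabel, add_mul, hmul,
    Nat.add_mul_mod_self_left]

theorem periodic_christoffelLetter : Periodic (christoffelLetter α β) (α + β) := by
  intro x
  rw [christoffelLetter, christoffelLetter, christoffelLabel, christoffelLabel, add_mul,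
    Nat.add_mul_mod_self_left]

theorem lowerChristoffel_eq_window (hα : 0 < α) :
    lowerChristoffel α β = window (christoffelLetter α β) 0 (α + β) := by
  rw [lowerChristoffel, window, ← List.range_eq_range']
  refine List.map_congr_left fun i _ => ?_
  have hdiv := Nat.add_div (a := i * β) (b := β) (show 0 < α + β by omega)
  rw [Nat.div_eq_of_lt (show β < α + β by omega), Nat.mod_eq_of_lt (show β < α + β by omega)]
    at hdiv
  rw [add_one_mul, hdiv, christoffelLetter, christoffelLabel, decide_eq_decide]
  split_ifs <;> omega

-- Let `s ≠ 0` be the label of a period `q < α + β`. Comparing first letters puts `s` on one side of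
-- `α`, and then moving back by `q` from the last position takes the label across the threshold `α`.
theorem isUnbordered_window_christoffelLetter (hα : 0 < α) (hβ : 0 < β) (hc : Nat.Coprime α β)
    {t : ℕ} (ht : christoffelLabel α β t = 0 ∨ christoffelLabel α β t = α + β - 1) :
    IsUnbordered (window (christoffelLetter α β) t (α + β)) := by
  intro q hq
  rw [hasPeriod_window_iff] at hq
  obtain ⟨hq0, hper⟩ := hq
  rw [length_window]
  by_contra! hqp
  have hfirst := hper 0 (by omega)
  have hlast := hper (α + β - 1 - q) (by omega)
  rw [add_zero, christoffelLetter_eq_iff] at hfirst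
  rw [christoffelLetter_eq_iff] at hlast
  have hq_ne : christoffelLabel α β q ≠ 0 := fun h =>
    Nat.not_dvd_of_pos_of_lt hq0 hqp ((christoffelLabel_eq_zero_iff hc).1 h)
  have hadd_q := christoffelLabel_add_eq_or (α := α) (β := β) t q
  have hadd_end := christoffelLabel_add_eq_or (α := α) (β := β) t (α + β - 1)
  have hadd_last := christoffelLabel_add_eq_or (α := α) (β := β) (t + (α + β - 1 - q)) q
  rw [show t + (α + β - 1 - q) + q = t + (α + β - 1) by omega] at hlast hadd_last
  have hend := christoffelLabel_add_sub_one hα hβ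
  have hlt := christoffelLabel_lt (β := β) hα
  have hlt_q := hlt q
  have hlt_tq := hlt (t + q)
  have hlt_end := hlt (t + (α + β - 1))
  have hlt_last := hlt (t + (α + β - 1 - q))
  obtain ht | ht := ht
  · have hq_below : christoffelLabel α β q < α := by omega
    have hend_label : christoffelLabel α β (t + (α + β - 1)) = α := by omega
    omega
  · have hq_above : α < christoffelLabel α β q := by omega
    have hend_label : christoffelLabel α β (t + (α + β - 1)) = α - 1 := by omega
    omega

theorem christoffelLetter_add_eq (hα : 0 < α) (hβ : 0 < β) (hc : Nat.Coprime α β) {a x : ℕ}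
    (ha : christoffelLabel α β a = α + β - 1) (hx : ¬ α + β ∣ x) (hx' : ¬ α + β ∣ x + 1) :
    christoffelLetter α β (x + a) = christoffelLetter α β x := by
  rw [← christoffelLabel_eq_zero_iff hc] at hx hx'
  have hadd_a := christoffelLabel_add_eq_or (α := α) (β := β) x a
  have hadd_one := christoffelLabel_add_eq_or (α := α) (β := β) x 1
  have hlt_a := christoffelLabel_lt (β := β) hα (x + a)
  have hlt_one := christoffelLabel_lt (β := β) hα (x + 1)
  rw [christoffelLabel_one hα] at hadd_one
  rw [christoffelLetter_eq_iff]
  omega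

end Christoffel

section MinimalPeriod

variable {α β a m j : ℕ}

theorem isMinPeriod_window_of_mem_Icc (hα : 0 < α) (hβ : 0 < β) (hc : Nat.Coprime α β) {t : ℕ}
    (ht : christoffelLabel α β t = 0 ∨ christoffelLabel α β t = α + β - 1)
    (hmem : t ∈ Icc j (j + m)) :
    IsMinPeriod (window (christoffelLetter α β) j (α + β + m)) (α + β) :=
  (isUnbordered_window_christoffelLetter hα hβ hc ht).isMinPeriod_of_isInfix length_window
    (window_isInfix_window hmem.1 (by have := hmem.2; omega))
    (hasPeriod_window_of_periodic periodic_christoffelLetter (by omega))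

theorem isMinPeriod_window_iff_of_le (hα : 0 < α) (hβ : 0 < β) (hc : Nat.Coprime α β)
    (ha : christoffelLabel α β a = α + β - 1) (hap : a < α + β) (hj : 0 < j) (hja : j ≤ a) :
    IsMinPeriod (window (christoffelLetter α β) j (α + β + m)) (α + β) ↔ a ≤ j + m := by
  refine ⟨fun h => ?_, fun h => isMinPeriod_window_of_mem_Icc hα hβ hc (.inr ha) ⟨hja, h⟩⟩
  by_contra! hlt
  refine hap.not_ge (h.2 a (hasPeriod_window_iff.2 ⟨by omega, fun i hi => ?_⟩))
  exact (christoffelLetter_add_eq hα hβ hc ha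
    (Nat.not_dvd_of_pos_of_lt (by omega) (by omega))
    (Nat.not_dvd_of_pos_of_lt (by omega) (by omega))).symm

theorem isMinPeriod_window_iff_of_gt (hα : 0 < α) (hβ : 0 < β) (hc : Nat.Coprime α β)
    (ha : christoffelLabel α β a = α + β - 1) (ha0 : 0 < a) (haj : a < j) (hj : j ≤ α + β) :
    IsMinPeriod (window (christoffelLetter α β) j (α + β + m)) (α + β) ↔ α + β ≤ j + m := by
  refine ⟨fun h => ?_, fun h => isMinPeriod_window_of_mem_Icc hα hβ hc
    (.inl ((christoffelLabel_eq_zero_iff hc).2 dvd_rfl)) ⟨hj, h⟩⟩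
  by_contra! hlt
  suffices HasPeriod (window (christoffelLetter α β) j (α + β + m)) (α + β - a) by
    have := h.2 _ this
    omega
  refine hasPeriod_window_iff.2 ⟨by omega, fun i hi => ?_⟩
  calc christoffelLetter α β (j + i)
      = christoffelLetter α β (j + i + (α + β)) := (periodic_christoffelLetter _).symm
    _ = christoffelLetter α β (j + i + (α + β - a) + a) := by congr 1; omega
    _ = christoffelLetter α β (j + i + (α + β - a)) :=
      christoffelLetter_add_eq hα hβ hc ha
        (Nat.not_dvd_of_lt_of_lt_mul_succ (k := 1) (by omega) (by omega))
        (Nat.not_dvd_of_lt_of_lt_mul_succ (k := 1) (by omega) (by omega))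

end MinimalPeriod

section Counting

variable {α β n : ℕ}

theorem setOf_isOmegaFactor_isMinPeriod_eq_image (hα : 0 < α) :
    {u | IsOmegaFactor u (lowerChristoffel α β) ∧ u.length = n ∧ IsMinPeriod u (α + β)} =
      (fun j => window (christoffelLetter α β) j n) ''
        {j ∈ Ioc 0 (α + β) | IsMinPeriod (window (christoffelLetter α β) j n) (α + β)} := by
  ext u
  simp only [lowerChristoffel_eq_window hα, mem_ofPred_eq, mem_image,
    isOmegaFactor_window_iff periodic_christoffelLetter (show 0 < α + β by omega)]
  constructor
  · rintro ⟨⟨j, hj, hu⟩, rfl, hmin⟩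
    exact ⟨j, ⟨hj, hu ▸ hmin⟩, hu.symm⟩
  · rintro ⟨j, ⟨hj, hmin⟩, rfl⟩
    exact ⟨⟨j, hj, by rw [length_window]⟩, length_window, hmin⟩

theorem NFactors_eq_zero_of_one_lt_gcd (hα : 0 < α) (hg : 1 < Nat.gcd α β) :
    NFactors α β n = 0 := by
  rw [NFactors, setOf_isOmegaFactor_isMinPeriod_eq_image hα]
  convert Set.ncard_empty (α := List Bool)
  rw [image_eq_empty, sep_eq_empty_iff_mem_false]
  intro j _ hmin
  have hpos : 0 < (α + β) / Nat.gcd α β :=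
    Nat.div_pos ((Nat.gcd_le_left β hα).trans (Nat.le_add_right α β)) (by omega)
  exact (Nat.div_lt_self (by omega) hg).not_ge
    (hmin.2 _ (hasPeriod_window_of_periodic periodic_christoffelLetter_div_gcd hpos))

theorem NFactors_eq_zero_of_lt (hα : 0 < α) (hβ : 0 < β) (hn : n < α + β) :
    NFactors α β n = 0 := by
  rw [NFactors]
  convert Set.ncard_empty (α := List Bool)
  refine eq_empty_of_forall_notMem ?_
  rintro u ⟨-, hlen, hmin⟩
  have := hmin.2 (α + β - 1) (hasPeriod_of_length_le (by omega) (by omega))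
  omega

theorem NFactors_eq_ncard_Ioc (hα : 0 < α) (hβ : 0 < β) (hc : Nat.Coprime α β)
    (hn : α + β ≤ n) :
    NFactors α β n =
      {j ∈ Ioc 0 (α + β) | IsMinPeriod (window (christoffelLetter α β) j n) (α + β)}.ncard := by
  have hunbordered : IsUnbordered (window (christoffelLetter α β) 0 (α + β)) :=
    isUnbordered_window_christoffelLetter hα hβ hc
      (.inl ((christoffelLabel_eq_zero_iff hc).2 (dvd_zero _)))
  rw [NFactors, setOf_isOmegaFactor_isMinPeriod_eq_image hα, InjOn.ncard_image]
  exact (window_injOn_Ioc periodic_christoffelLetter hunbordered hn).mono (sep_subset _ _)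

theorem NFactors_add_eq_min_add_min {a b m : ℕ} (hα : 0 < α) (hβ : 0 < β)
    (hc : Nat.Coprime α β) (ha : christoffelLabel α β a = α + β - 1) (ha0 : 0 < a) (hb0 : 0 < b)
    (hab : a + b = α + β) :
    NFactors α β (α + β + m) = min (m + 1) a + min (m + 1) b := by
  have hstarts : {j ∈ Ioc 0 (α + β) |
      IsMinPeriod (window (christoffelLetter α β) j (α + β + m)) (α + β)} =
        Ioc (a - min (m + 1) a) a ∪ Ioc (α + β - min (m + 1) b) (α + β) := by
    ext j
    simp only [mem_ofPred_eq, mem_union, mem_Ioc]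
    by_cases hj : 0 < j ∧ j ≤ α + β
    · obtain hja | haj := le_or_gt j a
      · rw [isMinPeriod_window_iff_of_le hα hβ hc ha (by omega) hj.1 hja]
        omega
      · rw [isMinPeriod_window_iff_of_gt hα hβ hc ha ha0 haj hj.2]
        omega
    · omega
  have hdisj : Disjoint (Ioc (a - min (m + 1) a) a)
      (Ioc (α + β - min (m + 1) b) (α + β)) :=
    Ioc_disjoint_Ioc_of_le (by omega)
  rw [NFactors_eq_ncard_Ioc hα hβ hc (by omega), hstarts, ncard_union_eq hdisj, ncard_Ioc_nat,
    ncard_Ioc_nat]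
  omega

end Counting

/-- Closed formula for `N_{α,β}(n)`; here `a'` and `b'` are the
multiplicative inverses of `α` and `β` modulo `α + β`, taken in `{1, …, α+β−1}`. -/
theorem stmt9 (α β n a' b' : ℕ) (hα : 0 < α) (hβ : 0 < β) (hn : 0 < n)
    (ha' : Nat.Coprime α β → 1 ≤ a' ∧ a' ≤ α + β - 1 ∧ α * a' % (α + β) = 1)
    (hb' : Nat.Coprime α β → 1 ≤ b' ∧ b' ≤ α + β - 1 ∧ β * b' % (α + β) = 1) :
    ((1 < Nat.gcd α β ∨ n < α + β) → NFactors α β n = 0) ∧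
    (Nat.Coprime α β → α + β ≤ n → n < α + β + min a' b' →
      NFactors α β n = 2 * (n - α - β + 1)) ∧
    (Nat.Coprime α β → α + β + min a' b' ≤ n → n < α + β + max a' b' →
      NFactors α β n = n - max a' b' + 1) ∧
    (Nat.Coprime α β → α + β + max a' b' ≤ n → NFactors α β n = α + β) := by
  refine ⟨?_, fun hc h1 h2 => ?_, fun hc h1 h2 => ?_, fun hc h1 => ?_⟩
  · rintro (hg | hlt)
    · exact NFactors_eq_zero_of_one_lt_gcd hα hg
    · exact NFactors_eq_zero_of_lt hα hβ hlt
  all_goals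
    have ha := ha' hc
    have hb := hb' hc
    have hab := inverse_add_inverse_eq hα hc ha hb
    obtain ⟨m, rfl⟩ := Nat.exists_eq_add_of_le (show α + β ≤ n by omega)
    rw [NFactors_add_eq_min_add_min hα hβ hc (christoffelLabel_of_mul_mod_eq_one hα ha.2.2)
      ha.1 hb.1 hab]
    omega
end
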